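/- Let ω ∈ ℂ satisfy ω² + ω + 1 = 0, and in ℂ[Z_1, Z_2, Z_3] set f = Z_1² + ω·Z_2² + ω²·Z_3², f̄ = Z_1² + ω²·Z_2² + ω·Z_3², Y_1 = Z_1² + Z_2² + Z_3², Y_2 = Z_1Z_2Z_3, Y_3 = Z_1²Z_2² + Z_2²Z_3² + Z_3²Z_1², X = (Z_1² − Z_2²)(Z_2² − Z_3²)(Z_3² − Z_1²), and let I(o) be the ideal generated by Y_1, Y_2, Y_3, X. Then the following three ideal containments hold: (i) the ideal generated by f·Z_1Z_2, f·Z_2Z_3, f·Z_3Z_1 is contained in the ideal generated by f̄·Z_1, f̄·Z_2, f̄·Z_3 together with I(o); (ii) the ideal generated by f̄²·Z_1, f̄²·Z_2, f̄²·Z_3 is contained in the ideal generated by f² together with I(o); (iii) the ideal generated by f̄²·Z_1, f̄²·Z_2, f̄²·Z_3 is contained in the ideal generated by f·Z_1Z_2, f·Z_2Z_3, f·Z_3Z_1 together with I(o). -/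

import Mathlib

/-!
Write `a, b, c` for the squares of the variables. The forms `Y₁, f, f̄` are the discrete Fourier
transform of `(a, b, c)`, so that `Y₁ + f + f̄ = 3a`, `Y₁ + ω²f + ωf̄ = 3b`, `Y₁ + ωf + ω²f̄ = 3c`,
and moreover `f f̄ = Y₁² - 3Y₃`.

* Multiplying the third relation by `Z₁Z₂` (and similarly for the others) turns the right-hand side
  into a multiple of `Y₂ = Z₁Z₂Z₃`, so `f Z₁Z₂` is a multiple of `f̄ Z₁` modulo `I(o)`.
  This gives the first containment.
* Squaring the first relation gives `f² + f̄² ≡ 9a²` modulo `(Y₁, Y₃)`. Since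
  `a² = aY₁ - Y₃ + bc` and `Z₁bc = Z₂Z₃Y₂`, it follows that `(f² + f̄²) Z₁ ∈ I(o)`, and similarly
  for `Z₂` and `Z₃`. This gives the second containment.
* Modulo `Y₁`, `f` is a combination of `b` and `c`, so `f² Z₁` is a combination of `Z₂ · f Z₁Z₂` and
  `Z₃ · f Z₃Z₁`. Together with the previous relations this gives the third containment.
-/

open MvPolynomial

/-- The degree-2 eigenpolynomial `f = Z₁² + ωZ₂² + ω²Z₃²` of the `𝔄_4`-action. -/
noncomputable def fEig (ω : ℂ) : MvPolynomial (Fin 3) ℂ :=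
  X 0 ^ 2 + C ω * X 1 ^ 2 + C (ω ^ 2) * X 2 ^ 2

/-- The degree-2 eigenpolynomial `f̄ = Z₁² + ω²Z₂² + ωZ₃²` of the `𝔄_4`-action. -/
noncomputable def fbarEig (ω : ℂ) : MvPolynomial (Fin 3) ℂ :=
  X 0 ^ 2 + C (ω ^ 2) * X 1 ^ 2 + C ω * X 2 ^ 2

/-- The ideal `I(o)` generated by the basic positive-degree `𝔄_4`-invariants
`Y₁, Y₂, Y₃, X`. -/
noncomputable def IoA4 : Ideal (MvPolynomial (Fin 3) ℂ) :=
  Ideal.span {X 0 ^ 2 + X 1 ^ 2 + X 2 ^ 2,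
    X 0 * X 1 * X 2,
    X 0 ^ 2 * X 1 ^ 2 + X 1 ^ 2 * X 2 ^ 2 + X 2 ^ 2 * X 0 ^ 2,
    (X 0 ^ 2 - X 1 ^ 2) * (X 1 ^ 2 - X 2 ^ 2) * (X 2 ^ 2 - X 0 ^ 2)}

lemma Y1_mem_IoA4 : X 0 ^ 2 + X 1 ^ 2 + X 2 ^ 2 ∈ IoA4 := Ideal.subset_span (by simp)

lemma Y2_mem_IoA4 : X 0 * X 1 * X 2 ∈ IoA4 := Ideal.subset_span (by simp)

lemma Y3_mem_IoA4 : X 0 ^ 2 * X 1 ^ 2 + X 1 ^ 2 * X 2 ^ 2 + X 2 ^ 2 * X 0 ^ 2 ∈ IoA4 :=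
  Ideal.subset_span (by simp)

lemma IoA4_combination_mem (p q r : MvPolynomial (Fin 3) ℂ) :
    p * (X 0 ^ 2 + X 1 ^ 2 + X 2 ^ 2) + q * (X 0 * X 1 * X 2) +
      r * (X 0 ^ 2 * X 1 ^ 2 + X 1 ^ 2 * X 2 ^ 2 + X 2 ^ 2 * X 0 ^ 2) ∈ IoA4 :=
  add_mem (add_mem (IoA4.mul_mem_left _ Y1_mem_IoA4) (IoA4.mul_mem_left _ Y2_mem_IoA4))
    (IoA4.mul_mem_left _ Y3_mem_IoA4)

lemma C_omega_relation {ω : ℂ} (hω : ω ^ 2 + ω + 1 = 0) :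
    (C ω : MvPolynomial (Fin 3) ℂ) ^ 2 + C ω + 1 = 0 := by
  rw [← C_pow, ← C_add, ← C_1, ← C_add, hω, C_0]

/-- The relation `(f̄² + f²) Z₁ ∈ I(o)`, obtained by squaring `f + f̄ = 3 Z₁² - Y₁`. -/
lemma sq_relation_zero {ω : ℂ} (hω : ω ^ 2 + ω + 1 = 0) :
    fbarEig ω ^ 2 * X 0 + C ω ^ 0 * (fEig ω ^ 2 * X 0) ∈ IoA4 := by
  have hw := C_omega_relation hω
  convert IoA4_combination_mem
    (C ω ^ 0 * (3 * X 0 ^ 2 - (X 0 ^ 2 + X 1 ^ 2 + X 2 ^ 2)) * X 0) (9 * C ω ^ 0 * (X 1 * X 2))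
    (-3 * X 0) using 1
  simp only [fEig, fbarEig, C_pow]
  generalize (C ω : MvPolynomial (Fin 3) ℂ) = w at *
  grind

/-- The image of `sq_relation_zero` under the cyclic symmetry of the variables, which multiplies
`f` and `f̄` by cube roots of unity; this is where the factor `ω²` comes from. -/
lemma sq_relation_one {ω : ℂ} (hω : ω ^ 2 + ω + 1 = 0) :
    fbarEig ω ^ 2 * X 1 + C ω ^ 2 * (fEig ω ^ 2 * X 1) ∈ IoA4 := by
  have hw := C_omega_relation hω
  convert IoA4_combination_mem
    (C ω * (3 * X 1 ^ 2 - (X 0 ^ 2 + X 1 ^ 2 + X 2 ^ 2)) * X 1) (9 * C ω * (X 2 * X 0))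
    (-3 * C ω * X 1) using 1
  simp only [fEig, fbarEig, C_pow]
  generalize (C ω : MvPolynomial (Fin 3) ℂ) = w at *
  grind

/-- The image of `sq_relation_one` under the cyclic symmetry of the variables. -/
lemma sq_relation_two {ω : ℂ} (hω : ω ^ 2 + ω + 1 = 0) :
    fbarEig ω ^ 2 * X 2 + C ω * (fEig ω ^ 2 * X 2) ∈ IoA4 := by
  have hw := C_omega_relation hω
  convert IoA4_combination_mem
    (C ω ^ 2 * (3 * X 2 ^ 2 - (X 0 ^ 2 + X 1 ^ 2 + X 2 ^ 2)) * X 2) (9 * C ω ^ 2 * (X 0 * X 1))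
    (-3 * C ω ^ 2 * X 2) using 1
  simp only [fEig, fbarEig, C_pow]
  generalize (C ω : MvPolynomial (Fin 3) ℂ) = w at *
  grind

/-- The nontrivial edges `m₆ → m₉`, `m₈ → m₁₀`, `m₉ → m₁₀` of the tree diagram of
Lemma 5.1: (i) `(fZ₁Z₂, fZ₂Z₃, fZ₃Z₁) ⊆ (f̄Z₁, f̄Z₂, f̄Z₃) + I(o)`;
(ii) `(f̄²Z₁, f̄²Z₂, f̄²Z₃) ⊆ (f²) + I(o)`;
(iii) `(f̄²Z₁, f̄²Z₂, f̄²Z₃) ⊆ (fZ₁Z₂, fZ₂Z₃, fZ₃Z₁) + I(o)`.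
Variables: `Z_1 = X 0`, `Z_2 = X 1`, `Z_3 = X 2`. -/
theorem A4_tree_containments (ω : ℂ) (hω : ω ^ 2 + ω + 1 = 0) :
    (Ideal.span {fEig ω * (X 0 * X 1), fEig ω * (X 1 * X 2), fEig ω * (X 2 * X 0)} ≤
      Ideal.span ({fbarEig ω * X 0, fbarEig ω * X 1, fbarEig ω * X 2} :
        Set (MvPolynomial (Fin 3) ℂ)) ⊔ IoA4)
    ∧ (Ideal.span {fbarEig ω ^ 2 * X 0, fbarEig ω ^ 2 * X 1, fbarEig ω ^ 2 * X 2} ≤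
        Ideal.span ({fEig ω ^ 2} : Set (MvPolynomial (Fin 3) ℂ)) ⊔ IoA4)
    ∧ (Ideal.span {fbarEig ω ^ 2 * X 0, fbarEig ω ^ 2 * X 1, fbarEig ω ^ 2 * X 2} ≤
        Ideal.span ({fEig ω * (X 0 * X 1), fEig ω * (X 1 * X 2), fEig ω * (X 2 * X 0)} :
          Set (MvPolynomial (Fin 3) ℂ)) ⊔ IoA4) := by
  have hw := C_omega_relation hω
  refine ⟨?_, ?_, ?_⟩
  · set K : Ideal (MvPolynomial (Fin 3) ℂ) := Ideal.span {fbarEig ω * X 0, fbarEig ω * X 1, fbarEig ω * X 2} with hK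
    have hg : ∀ p ∈ ({fbarEig ω * X 0, fbarEig ω * X 1, fbarEig ω * X 2} : Set (MvPolynomial (Fin 3) ℂ)), p ∈ K ⊔ IoA4 :=
      fun p hp => Ideal.mem_sup_left (Ideal.subset_span hp)
    rw [Ideal.span_le]
    rintro _ (rfl | rfl | rfl) <;> rw [SetLike.mem_coe]
    -- The coefficients come from solving the Fourier relations for `f`:
    -- `f = 3ω²c - ω²Y₁ - ωf̄ = 3a - Y₁ - f̄ = 3ωb - ωY₁ - ω²f̄`.
    · convert add_mem (Ideal.mul_mem_left _ (-C ω * X 1) (hg (fbarEig ω * X 0) (by simp)))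
        (Ideal.mem_sup_right (IoA4_combination_mem (-C ω ^ 2 * (X 0 * X 1)) (3 * C ω ^ 2 * X 2) 0))
        using 1
      simp only [fEig, fbarEig, C_pow]
      generalize (C ω : MvPolynomial (Fin 3) ℂ) = w at *
      grind
    · convert add_mem (Ideal.mul_mem_left _ (-X 2) (hg (fbarEig ω * X 1) (by simp)))
        (Ideal.mem_sup_right (IoA4_combination_mem (-(X 1 * X 2)) (3 * X 0) 0))
        using 1
      simp only [fEig, fbarEig, C_pow]
      generalize (C ω : MvPolynomial (Fin 3) ℂ) = w at *
      grind
    · convert add_mem (Ideal.mul_mem_left _ (-C ω ^ 2 * X 0) (hg (fbarEig ω * X 2) (by simp)))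
        (Ideal.mem_sup_right (IoA4_combination_mem (-C ω * (X 2 * X 0)) (3 * C ω * X 1) 0))
        using 1
      simp only [fEig, fbarEig, C_pow]
      generalize (C ω : MvPolynomial (Fin 3) ℂ) = w at *
      grind
  · set K : Ideal (MvPolynomial (Fin 3) ℂ) := Ideal.span {fEig ω ^ 2} with hK
    have hg : ∀ p ∈ ({fEig ω ^ 2} : Set (MvPolynomial (Fin 3) ℂ)), p ∈ K ⊔ IoA4 :=
      fun p hp => Ideal.mem_sup_left (Ideal.subset_span hp)
    rw [Ideal.span_le]
    rintro _ (rfl | rfl | rfl) <;> rw [SetLike.mem_coe]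
    · convert sub_mem (Ideal.mem_sup_right (sq_relation_zero hω))
        (Ideal.mul_mem_left _ (X 0) (hg (fEig ω ^ 2) (by simp))) using 1
      ring
    · convert sub_mem (Ideal.mem_sup_right (sq_relation_one hω))
        (Ideal.mul_mem_left _ (C ω ^ 2 * X 1) (hg (fEig ω ^ 2) (by simp))) using 1
      ring
    · convert sub_mem (Ideal.mem_sup_right (sq_relation_two hω))
        (Ideal.mul_mem_left _ (C ω * X 2) (hg (fEig ω ^ 2) (by simp))) using 1
      ring
  · set K : Ideal (MvPolynomial (Fin 3) ℂ) := Ideal.span {fEig ω * (X 0 * X 1), fEig ω * (X 1 * X 2), fEig ω * (X 2 * X 0)} with hK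
    have hg : ∀ p ∈ ({fEig ω * (X 0 * X 1), fEig ω * (X 1 * X 2), fEig ω * (X 2 * X 0)} : Set (MvPolynomial (Fin 3) ℂ)), p ∈ K ⊔ IoA4 :=
      fun p hp => Ideal.mem_sup_left (Ideal.subset_span hp)
    rw [Ideal.span_le]
    rintro _ (rfl | rfl | rfl) <;> rw [SetLike.mem_coe]
    -- In each case `Y₁` eliminates the square of the variable that multiplies `f²`, for example
    -- `f = Y₁ + (ω - 1)b + (ω² - 1)c`.
    · have hsq : fEig ω ^ 2 * X 0 ∈ K ⊔ IoA4 := by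
        convert add_mem (add_mem
          (Ideal.mul_mem_left _ ((C ω - 1) * X 1) (hg (fEig ω * (X 0 * X 1)) (by simp)))
          (Ideal.mul_mem_left _ ((C ω ^ 2 - 1) * X 2) (hg (fEig ω * (X 2 * X 0)) (by simp))))
          (Ideal.mem_sup_right (Ideal.mul_mem_left _ (1 * fEig ω * X 0) Y1_mem_IoA4)) using 1
        simp only [fEig, C_pow]
        ring
      convert sub_mem (Ideal.mem_sup_right (sq_relation_zero hω))
        (Ideal.mul_mem_left _ (C ω ^ 0) hsq) using 1
      ring
    · have hsq : fEig ω ^ 2 * X 1 ∈ K ⊔ IoA4 := by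
        convert add_mem (add_mem
          (Ideal.mul_mem_left _ ((1 - C ω) * X 0) (hg (fEig ω * (X 0 * X 1)) (by simp)))
          (Ideal.mul_mem_left _ ((C ω ^ 2 - C ω) * X 2) (hg (fEig ω * (X 1 * X 2)) (by simp))))
          (Ideal.mem_sup_right (Ideal.mul_mem_left _ (C ω * fEig ω * X 1) Y1_mem_IoA4)) using 1
        simp only [fEig, C_pow]
        ring
      convert sub_mem (Ideal.mem_sup_right (sq_relation_one hω))
        (Ideal.mul_mem_left _ (C ω ^ 2) hsq) using 1
      ring
    · have hsq : fEig ω ^ 2 * X 2 ∈ K ⊔ IoA4 := by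
        convert add_mem (add_mem
          (Ideal.mul_mem_left _ ((1 - C ω ^ 2) * X 0) (hg (fEig ω * (X 2 * X 0)) (by simp)))
          (Ideal.mul_mem_left _ ((C ω - C ω ^ 2) * X 1) (hg (fEig ω * (X 1 * X 2)) (by simp))))
          (Ideal.mem_sup_right (Ideal.mul_mem_left _ (C ω ^ 2 * fEig ω * X 2) Y1_mem_IoA4)) using 1
        simp only [fEig, C_pow]
        ring
      convert sub_mem (Ideal.mem_sup_right (sq_relation_two hω))
        (Ideal.mul_mem_left _ (C ω ^ 1) hsq) using 1
      ring
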